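/- arXiv:2408.06392 — 2 statements merged into one kernel-verified Lean document; each statement's English description precedes it below -/
import Mathlib

section
/- Let f be an almost embedding of K₅ − 45 (the complete graph on {1,…,5} with the edge {4,5} removed) in the plane. Then wu_tri(p₄₁, p₄₂, p₄₃) − wu_tri(p₅₁, p₅₂, p₅₃) = 2·(w_f(123, 4) − w_f(123, 5)), where for v ∈ {4,5} the triodic Wu number is wu_tri(p_{v1}, p_{v2}, p_{v3}) := 2·(w'(p̄_{v2}p_{v3}, f₁) + w'(p̄_{v1}p_{v2}, f₃) + w'(p̄_{v3}p_{v1}, f₂)) (p̄ denoting the reverse of p and juxtaposition denoting concatenation), and w_f(123, v) := w'(p₁₂, f_v) + w'(p₂₃, f_v) + w'(p₃₁, f_v). -/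
/-!
If a polygonal line from `A` to `B` and one from `C` to `D` are disjoint, the vector from a point
of the first to a point of the second never vanishes. Its rotation along the boundary of the
parameter square is therefore zero, so the winding of the second line around `A` minus that around
`B` equals the winding of the first line around `C` minus that around `D`. For `v ∈ {4, 5}`, apply
this to each edge `p_{vi}` and the edge of the triangle `123` opposite to `i`: the sum of the three
identities expresses the triodic Wu number at `v` as `2 w_f(123, v)` plus a quantity depending only
on the triangle, which cancels in the difference.
-/

/-- Sum of the oriented angles ∠A₁OA₂ + ∠A₂OA₃ + ⋯ + ∠A_{m−1}OA_m at `O`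
along a polygonal line given as a list of points in the plane `ℂ`,
where ∠AOB := Complex.arg ((B − O)/(A − O)) ∈ (−π, π]. -/
noncomputable def angSum (O : ℂ) : List ℂ → ℝ
  | a :: b :: rest => Complex.arg ((b - O) / (a - O)) + angSum O (b :: rest)
  | _ => 0

/-- `w'(A₁…A_m, O)`: the (non-closed) winding number of a polygonal line around `O`,
i.e. `(∠A₁OA₂ + ⋯ + ∠A_{m−1}OA_m) / (2π)`. -/
noncomputable def wp (O : ℂ) (l : List ℂ) : ℝ := angSum O l / (2 * Real.pi)

/-- `w(A₁…A_m, O)`: the winding number of the closed polygonal line `A₁…A_m` around `O`,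
i.e. `(∠A₁OA₂ + ⋯ + ∠A_{m−1}OA_m + ∠A_mOA₁) / (2π)`. -/
noncomputable def wcl (O : ℂ) (l : List ℂ) : ℝ := wp O (l ++ [l.headI])

/-- The image of a polygonal line: the union of the segments between consecutive points. -/
def imagePL : List ℂ → Set ℂ
  | [] => ∅
  | [a] => {a}
  | a :: b :: rest => segment ℝ a b ∪ imagePL (b :: rest)

/-- Edges of `K₅ − 45`: all pairs of distinct vertices except `{4,5}`
(vertices `1,…,5` are encoded as `0,…,4 : Fin 5`, so the removed edge is `{3,4}`). -/
def IsEdgeK5m45 (i j : Fin 5) : Prop := i ≠ j ∧ ¬(i = 3 ∧ j = 4) ∧ ¬(i = 4 ∧ j = 3)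

lemma exists_forall_re_mul_sub_pos {s t : Set ℂ} (hs : Convex ℝ s) (hs' : IsCompact s)
    (ht : Convex ℝ t) (ht' : IsClosed t) (h : Disjoint s t) :
    ∃ w : ℂ, ∀ x ∈ s, ∀ y ∈ t, 0 < (w * (y - x)).re := by
  obtain ⟨g, u, v, hgs, huv, hgt⟩ :=
    RCLike.geometric_hahn_banach_compact_closed (𝕜 := ℂ) hs hs' ht ht' h
  have hg (z : ℂ) : g z = g 1 * z := by
    rw [mul_comm, ← smul_eq_mul, ← map_smul, smul_eq_mul, mul_one]
  refine ⟨g 1, fun x hx y hy ↦ ?_⟩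
  rw [← hg, map_sub, Complex.sub_re, sub_pos]
  exact (hgs x hx).trans (huv.trans (hgt y hy))

lemma isCompact_segment {E : Type*} [AddCommGroup E] [TopologicalSpace E] [IsTopologicalAddGroup E]
    [Module ℝ E] [ContinuousSMul ℝ E] (x y : E) : IsCompact (segment ℝ x y) := by
  rw [← convexHull_pair]
  exact (Set.toFinite {x, y}).isCompact_convexHull ℝ

lemma exists_re_mul_sub_pos_of_disjoint_segment {A B C D : ℂ}
    (h : Disjoint (segment ℝ A B) (segment ℝ C D)) :
    ∃ w : ℂ, ∀ x ∈ segment ℝ A B, ∀ y ∈ segment ℝ C D, 0 < (w * (y - x)).re :=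
  exists_forall_re_mul_sub_pos (convex_segment A B) (isCompact_segment A B) (convex_segment C D)
    (isCompact_segment C D).isClosed h

lemma arg_div_eq_arg_sub_arg_of_re_pos {u v : ℂ} (hu : 0 < u.re) (hv : 0 < v.re) :
    Complex.arg (u / v) = Complex.arg u - Complex.arg v := by
  have hu₀ : u ≠ 0 := by rintro rfl; exact lt_irrefl 0 hu
  have hv₀ : v ≠ 0 := by rintro rfl; exact lt_irrefl 0 hv
  have hu' := abs_lt.mp (Complex.abs_arg_lt_pi_div_two_iff.mpr (Or.inl hu))
  have hv' := abs_lt.mp (Complex.abs_arg_lt_pi_div_two_iff.mpr (Or.inl hv))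
  rw [← Complex.arg_coe_angle_toReal_eq_arg, Complex.arg_div_coe_angle hu₀ hv₀,
    ← Real.Angle.coe_sub, Real.Angle.toReal_coe_eq_self_iff_mem_Ioc]
  constructor <;> linarith

lemma arg_div_eq_arg_mul_sub_arg_mul {u v w : ℂ} (hu : 0 < (w * u).re) (hv : 0 < (w * v).re) :
    Complex.arg (u / v) = Complex.arg (w * u) - Complex.arg (w * v) := by
  have hw : w ≠ 0 := by rintro rfl; simp at hu
  rw [← arg_div_eq_arg_sub_arg_of_re_pos hu hv, mul_div_mul_left _ _ hw]

lemma arg_sub_div_sub_swap {O A B : ℂ} (h : O ∉ segment ℝ A B) :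
    Complex.arg ((A - O) / (B - O)) = -Complex.arg ((B - O) / (A - O)) := by
  obtain ⟨w, hw⟩ := exists_re_mul_sub_pos_of_disjoint_segment (A := O) (B := O) (C := A)
    (D := B) (by rwa [segment_same, Set.disjoint_singleton_left])
  have hA := hw O (left_mem_segment ℝ O O) A (left_mem_segment ℝ A B)
  have hB := hw O (left_mem_segment ℝ O O) B (right_mem_segment ℝ A B)
  rw [arg_div_eq_arg_mul_sub_arg_mul hA hB, arg_div_eq_arg_mul_sub_arg_mul hB hA, neg_sub]

lemma arg_sub_arg_eq_of_disjoint_segment {A B C D : ℂ}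
    (h : Disjoint (segment ℝ A B) (segment ℝ C D)) :
    Complex.arg ((D - A) / (C - A)) - Complex.arg ((D - B) / (C - B)) =
      Complex.arg ((B - C) / (A - C)) - Complex.arg ((B - D) / (A - D)) := by
  obtain ⟨w, hw⟩ := exists_re_mul_sub_pos_of_disjoint_segment h
  have hAC := hw A (left_mem_segment ℝ A B) C (left_mem_segment ℝ C D)
  have hAD := hw A (left_mem_segment ℝ A B) D (right_mem_segment ℝ C D)
  have hBC := hw B (right_mem_segment ℝ A B) C (left_mem_segment ℝ C D)
  have hBD := hw B (right_mem_segment ℝ A B) D (right_mem_segment ℝ C D)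
  have reverse_vectors (X : ℂ) : (B - X) / (A - X) = (X - B) / (X - A) := by
    rw [← neg_sub X B, ← neg_sub X A, neg_div_neg_eq]
  -- After multiplication by `w` all four differences lie in the right half-plane, so both sides
  -- are the same alternating sum of their arguments.
  rw [reverse_vectors C, reverse_vectors D, arg_div_eq_arg_mul_sub_arg_mul hAD hAC,
    arg_div_eq_arg_mul_sub_arg_mul hBD hBC, arg_div_eq_arg_mul_sub_arg_mul hBC hAC,
    arg_div_eq_arg_mul_sub_arg_mul hBD hAD]
  ring

lemma headI_eq_head {α : Type*} [Inhabited α] {l : List α} (h : l ≠ []) : l.headI = l.head h := by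
  cases l with
  | nil => exact (h rfl).elim
  | cons a l => rfl

/-- The polygonal line `l` joins `A` to `B`. The conjunct `l ≠ []` excludes the default value of
`List.headI` on the empty list. -/
def Joins (l : List ℂ) (A B : ℂ) : Prop := ∃ h : l ≠ [], l.headI = A ∧ l.getLast h = B

@[simp]
lemma joins_singleton {a A B : ℂ} : Joins [a] A B ↔ a = A ∧ a = B := by
  simp [Joins]

@[simp]
lemma joins_cons_cons {a b A B : ℂ} {l : List ℂ} :
    Joins (a :: b :: l) A B ↔ a = A ∧ Joins (b :: l) b B := by
  simp [Joins]

lemma not_joins_nil {A B : ℂ} : ¬Joins [] A B := fun h ↦ h.1 rfl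

namespace Joins

variable {l : List ℂ} {A B : ℂ}

lemma right_mem_imagePL (h : Joins l A B) : B ∈ imagePL l := by
  fun_induction imagePL l generalizing A with
  | case1 => exact (not_joins_nil h).elim
  | case2 a => exact (joins_singleton.mp h).2.symm
  | case3 a b l ih => exact Or.inr (ih (joins_cons_cons.mp h).2)

lemma reverse (h : Joins l A B) : Joins l.reverse B A := by
  obtain ⟨hl, rfl, rfl⟩ := h
  have hl' := List.reverse_ne_nil_iff.mpr hl
  exact ⟨hl', by rw [headI_eq_head hl', List.head_reverse],
    by rw [List.getLast_reverse, headI_eq_head hl]⟩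

end Joins

lemma angSum_append_cons (O a : ℂ) (l m : List ℂ) :
    angSum O (l ++ a :: m) = angSum O (l ++ [a]) + angSum O (a :: m) := by
  fun_induction angSum O l with
  | case1 b c l ih =>
    simp only [List.cons_append, angSum] at ih ⊢
    rw [ih, add_assoc]
  | case2 l hl =>
    match l with
    | [] => simp [angSum]
    | [b] => simp [angSum]
    | b :: c :: l => exact (hl b c l rfl).elim

lemma Joins.wp_append {l m : List ℂ} {A B C : ℂ} (hl : Joins l A B) (hm : Joins m B C) (O : ℂ) :
    wp O (l ++ m) = wp O l + wp O m := by
  obtain ⟨hl_ne, -, hl_last⟩ := hl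
  obtain ⟨hm_ne, hm_head, -⟩ := hm
  obtain ⟨b, m, rfl⟩ := List.exists_cons_of_ne_nil hm_ne
  obtain rfl : b = B := hm_head
  rw [← List.dropLast_append_getLast hl_ne, hl_last, List.append_assoc, List.singleton_append]
  simp only [wp, angSum_append_cons O b _ (b :: m), angSum, Complex.arg_div_self, zero_add, add_div]

lemma angSum_reverse {O : ℂ} {l : List ℂ} (h : O ∉ imagePL l) :
    angSum O l.reverse = -angSum O l := by
  fun_induction imagePL l with
  | case1 => simp [angSum]
  | case2 a => simp [angSum]
  | case3 a b l ih =>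
    rw [Set.mem_union, not_or] at h
    calc angSum O (a :: b :: l).reverse
      _ = angSum O (b :: l).reverse + angSum O [b, a] := by
        simp only [List.reverse_cons, List.append_assoc, List.singleton_append,
          angSum_append_cons O b _ [a]]
      _ = -angSum O (b :: l) + -Complex.arg ((b - O) / (a - O)) := by
        rw [ih h.2, ← arg_sub_div_sub_swap h.1]
        simp only [angSum, add_zero]
      _ = -angSum O (a :: b :: l) := by rw [angSum]; ring

lemma wp_reverse {O : ℂ} {l : List ℂ} (h : O ∉ imagePL l) : wp O l.reverse = -wp O l := by
  simp only [wp, angSum_reverse h, neg_div]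

lemma Joins.angSum_sub_angSum_of_disjoint_segment {l : List ℂ} {A B C D : ℂ} (hl : Joins l A B)
    (h : Disjoint (imagePL l) (segment ℝ C D)) :
    angSum C l - angSum D l =
      Complex.arg ((D - A) / (C - A)) - Complex.arg ((D - B) / (C - B)) := by
  fun_induction imagePL l generalizing A with
  | case1 => exact (not_joins_nil hl).elim
  | case2 a =>
    obtain ⟨rfl, rfl⟩ := joins_singleton.mp hl
    simp only [angSum, sub_self]
  | case3 a b l ih =>
    obtain ⟨rfl, hl_tail⟩ := joins_cons_cons.mp hl
    rw [Set.disjoint_union_left] at h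
    have first_segment := arg_sub_arg_eq_of_disjoint_segment h.1
    have remaining_line := ih hl_tail h.2
    simp only [angSum]
    linarith

lemma Joins.angSum_sub_angSum_of_disjoint {l m : List ℂ} {A B C D : ℂ} (hl : Joins l A B)
    (hm : Joins m C D) (h : Disjoint (imagePL l) (imagePL m)) :
    angSum A m - angSum B m = angSum C l - angSum D l := by
  fun_induction imagePL m generalizing C with
  | case1 => exact (not_joins_nil hm).elim
  | case2 c =>
    obtain ⟨rfl, rfl⟩ := joins_singleton.mp hm
    simp only [angSum, sub_self]
  | case3 c d m ih =>
    obtain ⟨rfl, hm_tail⟩ := joins_cons_cons.mp hm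
    rw [Set.disjoint_union_right] at h
    have first_segment := hl.angSum_sub_angSum_of_disjoint_segment h.1
    have remaining_line := ih hm_tail h.2
    simp only [angSum]
    linarith

lemma Joins.wp_sub_wp_of_disjoint {l m : List ℂ} {A B C D : ℂ} (hl : Joins l A B)
    (hm : Joins m C D) (h : Disjoint (imagePL l) (imagePL m)) :
    wp A m - wp B m = wp C l - wp D l := by
  simp only [wp, ← sub_div, hl.angSum_sub_angSum_of_disjoint hm h]

/-- The triodic Wu number of polygonal lines `q 0`, `q 1`, `q 2` from a common point to `f 0`,
`f 1`, `f 2`. Indices are cyclic: `Fin 3` stands for the paper's `1, 2, 3`. -/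
noncomputable def triodicWu (f : Fin 3 → ℂ) (q : Fin 3 → List ℂ) : ℝ :=
  2 * ∑ i, wp (f i) ((q (i + 1)).reverse ++ q (i + 2))

/-- An almost embedding of `K₄` with vertices `f 0`, `f 1`, `f 2`, `O`, where `q i` is the edge
from `O` to `f i` and `e i` the edge opposite to it, from `f (i + 1)` to `f (i + 2)` cyclically.
That no vertex lies on an edge not incident to it follows from `disjoint`, since such a vertex
is an endpoint of the opposite edge. -/
structure IsAlmostEmbeddingK4 (f : Fin 3 → ℂ) (e : Fin 3 → List ℂ) (O : ℂ)
    (q : Fin 3 → List ℂ) : Prop where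
  joins_leg (i : Fin 3) : Joins (q i) O (f i)
  joins_edge (i : Fin 3) : Joins (e i) (f (i + 1)) (f (i + 2))
  disjoint (i : Fin 3) : Disjoint (imagePL (q i)) (imagePL (e i))

namespace IsAlmostEmbeddingK4

variable {f : Fin 3 → ℂ} {e q : Fin 3 → List ℂ} {O : ℂ}

lemma notMem_imagePL_leg (h : IsAlmostEmbeddingK4 f e O q) (i : Fin 3) :
    f i ∉ imagePL (q (i + 1)) := by
  have mem_edge : f i ∈ imagePL (e (i + 1)) := by
    have cyclic : i + 1 + 2 = i := by rw [add_assoc]; exact add_zero i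
    simpa only [cyclic] using (h.joins_edge (i + 1)).right_mem_imagePL
  exact Set.disjoint_right.mp (h.disjoint (i + 1)) mem_edge

lemma wp_reverse_append (h : IsAlmostEmbeddingK4 f e O q) (i : Fin 3) :
    wp (f i) ((q (i + 1)).reverse ++ q (i + 2)) =
      wp (f i) (q (i + 2)) - wp (f i) (q (i + 1)) := by
  rw [(h.joins_leg (i + 1)).reverse.wp_append (h.joins_leg (i + 2)),
    wp_reverse (h.notMem_imagePL_leg i), neg_add_eq_sub]

lemma wp_leg_sub_wp_leg (h : IsAlmostEmbeddingK4 f e O q) (i : Fin 3) :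
    wp (f (i + 1)) (q i) - wp (f (i + 2)) (q i) = wp O (e i) - wp (f i) (e i) :=
  ((h.joins_leg i).wp_sub_wp_of_disjoint (h.joins_edge i) (h.disjoint i)).symm

theorem triodicWu_eq (h : IsAlmostEmbeddingK4 f e O q) :
    triodicWu f q = 2 * (∑ i, wp O (e i) - ∑ i, wp (f i) (e i)) := by
  rw [triodicWu, ← Finset.sum_sub_distrib]
  congr 1
  calc ∑ i, wp (f i) ((q (i + 1)).reverse ++ q (i + 2))
    _ = ∑ i, (wp (f i) (q (i + 2)) - wp (f i) (q (i + 1))) := by simp only [h.wp_reverse_append]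
    _ = ∑ i, (wp (f (i + 1)) (q i) - wp (f (i + 2)) (q i)) := by
      simp only [Finset.sum_sub_distrib, Fin.sum_univ_three, zero_add, Fin.reduceAdd]
      ring
    _ = ∑ i, (wp O (e i) - wp (f i) (e i)) := by simp only [h.wp_leg_sub_wp_leg]

end IsAlmostEmbeddingK4

theorem isAlmostEmbeddingK4_of_K5_minus_edge {f : Fin 5 → ℂ} {p : Fin 5 → Fin 5 → List ℂ}
    (hjoin : ∀ i j, IsEdgeK5m45 i j → Joins (p i j) (f i) (f j))
    (hdisj : ∀ i j k l : Fin 5, IsEdgeK5m45 i j → IsEdgeK5m45 k l →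
      i ≠ k → i ≠ l → j ≠ k → j ≠ l → Disjoint (imagePL (p i j)) (imagePL (p k l)))
    {v : Fin 5} (hv : v = 3 ∨ v = 4) :
    IsAlmostEmbeddingK4 ![f 0, f 1, f 2] ![p 1 2, p 2 0, p 0 1] (f v)
      ![p v 0, p v 1, p v 2] := by
  obtain ⟨⟨v0, v1, v2⟩, n0, n1, n2⟩ :
      (IsEdgeK5m45 v 0 ∧ IsEdgeK5m45 v 1 ∧ IsEdgeK5m45 v 2) ∧ v ≠ 0 ∧ v ≠ 1 ∧ v ≠ 2 := by
    unfold IsEdgeK5m45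
    decide +revert
  obtain ⟨e0, e1, e2⟩ : IsEdgeK5m45 1 2 ∧ IsEdgeK5m45 2 0 ∧ IsEdgeK5m45 0 1 := by
    unfold IsEdgeK5m45
    decide
  refine { joins_leg := fun i ↦ ?_, joins_edge := fun i ↦ ?_, disjoint := fun i ↦ ?_ }
  · fin_cases i
    exacts [hjoin _ _ v0, hjoin _ _ v1, hjoin _ _ v2]
  · fin_cases i
    exacts [hjoin _ _ e0, hjoin _ _ e1, hjoin _ _ e2]
  · fin_cases i
    exacts [hdisj _ _ _ _ v0 e0 n1 n2 (by decide) (by decide),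
      hdisj _ _ _ _ v1 e1 n2 n0 (by decide) (by decide),
      hdisj _ _ _ _ v2 e2 n0 n1 (by decide) (by decide)]

theorem triodic_wu_difference_K5_minus_edge_general {f : Fin 3 → ℂ}
    {e q q' : Fin 3 → List ℂ} {O O' : ℂ} (h : IsAlmostEmbeddingK4 f e O q)
    (h' : IsAlmostEmbeddingK4 f e O' q') :
    triodicWu f q - triodicWu f q' = 2 * (∑ i, wp O (e i) - ∑ i, wp O' (e i)) := by
  rw [h.triodicWu_eq, h'.triodicWu_eq]
  ring

/-- Let `f` be an almost embedding of `K₅ − 45` in the plane. Then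
`wu_tri(p₄₁, p₄₂, p₄₃) − wu_tri(p₅₁, p₅₂, p₅₃) = 2·(w_f(123, 4) − w_f(123, 5))`, where
for `v ∈ {4,5}` the triodic Wu number is
`wu_tri(p_{v1}, p_{v2}, p_{v3}) := 2·(w'(p̄_{v2}p_{v3}, f₁) + w'(p̄_{v1}p_{v2}, f₃) + w'(p̄_{v3}p_{v1}, f₂))`
(`p̄` the reverse of `p`, juxtaposition the concatenation), and
`w_f(123, v) := w'(p₁₂, f_v) + w'(p₂₃, f_v) + w'(p₃₁, f_v)`
(vertices `1,…,5` are encoded as `0,…,4 : Fin 5`). -/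
theorem triodic_wu_difference_K5_minus_edge (f : Fin 5 → ℂ)
    (p : Fin 5 → Fin 5 → List ℂ)
    (hinj : Function.Injective f)
    (hne : ∀ i j, IsEdgeK5m45 i j → p i j ≠ [])
    (hjoin : ∀ i j, ∀ h : IsEdgeK5m45 i j,
      (p i j).headI = f i ∧ (p i j).getLast (hne i j h) = f j)
    (hsym : ∀ i j, p j i = (p i j).reverse)
    (hdisj : ∀ i j k l : Fin 5, IsEdgeK5m45 i j → IsEdgeK5m45 k l →
      i ≠ k → i ≠ l → j ≠ k → j ≠ l →
      Disjoint (imagePL (p i j)) (imagePL (p k l)))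
    (hvert : ∀ i j l : Fin 5, IsEdgeK5m45 i j → l ≠ i → l ≠ j →
      f l ∉ imagePL (p i j)) :
    2 * (wp (f 0) ((p 3 1).reverse ++ p 3 2) + wp (f 2) ((p 3 0).reverse ++ p 3 1) +
        wp (f 1) ((p 3 2).reverse ++ p 3 0)) -
      2 * (wp (f 0) ((p 4 1).reverse ++ p 4 2) + wp (f 2) ((p 4 0).reverse ++ p 4 1) +
        wp (f 1) ((p 4 2).reverse ++ p 4 0)) =
      2 * ((wp (f 3) (p 0 1) + wp (f 3) (p 1 2) + wp (f 3) (p 2 0)) -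
        (wp (f 4) (p 0 1) + wp (f 4) (p 1 2) + wp (f 4) (p 2 0))) := by
  have hK4 {v : Fin 5} := isAlmostEmbeddingK4_of_K5_minus_edge (v := v)
    (fun i j h ↦ ⟨hne i j h, hjoin i j h⟩) hdisj
  have h := triodic_wu_difference_K5_minus_edge_general (hK4 (.inl rfl)) (hK4 (.inr rfl))
  simp only [triodicWu, Fin.sum_univ_three, Matrix.cons_val, zero_add, Fin.reduceAdd] at h
  linear_combination h
end

section
/- (Linear Conway–Gordon–Sachs theorem.) Let f : {1,…,6} → ℝ³ be six points in 3-space such that no four of them lie in one plane (every four of the points are affinely independent). Then there exists a partition of {1,…,6} into two 3-element sets {i,j,k} and {p,q,r} such that the triangle convexHull{f(i), f(j), f(k)} intersects the union of segments [f(p)f(q)] ∪ [f(q)f(r)] ∪ [f(r)f(p)] in exactly one point. -/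
/-!
The affine dependencies of `2 * m` points in general position in dimension `2 * m - 3` form a plane
`K` in `ι → 𝕜`, and a nonzero dependency vanishes at no more than one point. So the coordinate
functionals are `2 * m` pairwise independent vectors in the dual of `K` (the Gale diagram).

Rotate an oriented line in the Gale diagram through half a turn. The number of vectors on its left
changes by one at a time, and it ends at `2 * m` minus its initial value, so at some moment it takes
the consecutive values `m - 1`, `m`, `m + 1`. Let `S` be the left side when the value is `m`. The
events `r ∈ S` and `r' ∉ S` that surround this moment are, up to scaling, the only dependencies that
are nonnegative on `S`, nonpositive on `Sᶜ` and vanish somewhere. A common point of the simplex on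
`Sᶜ` and a proper face of the simplex on `S` is such a dependency vanishing in `S`, and only the one
at `r` does so.
-/

open Finset Module

section SignedSupport

variable {ι 𝕜 : Type*} [Zero 𝕜] [LinearOrder 𝕜]

/-- The pair `(A, B)` is the signed support of `w`, in the sense of oriented matroids: `A` is the
set of coordinates where `w` is positive, and `B` is the set of those where it is negative. -/
def HasSignedSupport (w : ι → 𝕜) (A B : Finset ι) : Prop :=
  ∀ a, (0 < w a ↔ a ∈ A) ∧ (w a < 0 ↔ a ∈ B)

namespace HasSignedSupport

variable {w : ι → 𝕜} {A B : Finset ι} {a : ι}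

lemma pos (h : HasSignedSupport w A B) (ha : a ∈ A) : 0 < w a := (h a).1.2 ha

lemma neg (h : HasSignedSupport w A B) (ha : a ∈ B) : w a < 0 := (h a).2.2 ha

lemma eq_zero_iff (h : HasSignedSupport w A B) : w a = 0 ↔ a ∉ A ∧ a ∉ B := by
  rw [← (h a).1, ← (h a).2, not_lt, not_lt, and_comm, ge_antisymm_iff]

end HasSignedSupport

lemma card_pos_lt_or_card_neg_lt [Fintype ι] {m : ℕ} {w : ι → 𝕜} {r : ι}
    (hr : w r = 0) (hcard : Fintype.card ι ≤ 2 * m) : #{a | 0 < w a} < m ∨ #{a | w a < 0} < m := by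
  classical
  have hsub : univ.filter (0 < w ·) ∪ univ.filter (w · < 0) ⊆ univ.erase r := by
    intro a ha
    have hne : w a ≠ 0 := by
      simpa [lt_or_lt_iff_ne, ne_comm] using ha
    simpa using fun h : a = r ↦ hne (h ▸ hr)
  have hdisj : Disjoint (univ.filter (0 < w ·)) (univ.filter (w · < 0)) :=
    disjoint_filter.2 fun _ _ h ↦ h.not_gt
  have hle := card_le_card hsub
  rw [card_union_of_disjoint hdisj, card_erase_of_mem (mem_univ r), card_univ] at hle
  have : 0 < Fintype.card ι := Fintype.card_pos_iff.2 ⟨r⟩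
  omega

end SignedSupport

section LeftSide

lemma exists_consecutive_of_lt_of_lt {c : ℕ → ℕ} {m n : ℕ}
    (hstep : ∀ k < n, c (k + 1) = c k + 1 ∨ c k = c (k + 1) + 1) (h₀ : c 0 < m) (hn : m < c n) :
    ∃ k, k + 2 ≤ n ∧ c (k + 1) = m ∧ c k + 1 = m ∧ c (k + 2) = m + 1 := by
  classical
  have hex : ∃ k, m < c k := ⟨n, hn⟩
  have hle : ∀ k < Nat.find hex, c k ≤ m := fun k hk ↦ not_lt.1 (Nat.find_min hex hk)
  have hfind : m < c (Nat.find hex) := Nat.find_spec hex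
  have hfind_le : Nat.find hex ≤ n := Nat.find_min' hex hn
  obtain hk | hk | ⟨k, hk⟩ :
      Nat.find hex = 0 ∨ Nat.find hex = 1 ∨ ∃ k, Nat.find hex = k + 2 := by
    rcases Nat.find hex with _ | _ | k <;> simp
  · grind
  · grind
  · have := hle k
    have := hle (k + 1)
    have := hstep k
    have := hstep (k + 1)
    exact ⟨k, by grind⟩

lemma exists_equiv_fin_strictMono {ι 𝕜 : Type*} [Fintype ι] [LinearOrder 𝕜] {t : ι → 𝕜}
    (ht : Function.Injective t) :
    ∃ e : Fin (Fintype.card ι) ≃ ι, StrictMono (t ∘ e) := by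
  let _ : LinearOrder ι := LinearOrder.lift' t ht
  let e := Fintype.orderIsoFinOfCardEq ι rfl
  exact ⟨e.toEquiv, fun _ _ h ↦ e.strictMono h⟩

variable {ι 𝕜 : Type*} [Fintype ι] [DecidableEq ι] [Zero 𝕜] [LinearOrder 𝕜]

/-- The vectors `y a • (1, t a)` to the left of a line through the origin of `𝕜²` that has rotated
past exactly those directions `(1, t a)` with `a ∈ L`. -/
def leftSide (y : ι → 𝕜) (L : Finset ι) : Finset ι := {a | 0 < y a ↔ a ∉ L}

variable {y t : ι → 𝕜} {L : Finset ι} {r : ι}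

lemma mem_leftSide {a : ι} : a ∈ leftSide y L ↔ (0 < y a ↔ a ∉ L) := by
  simp [leftSide]

lemma leftSide_insert_of_neg (hr : r ∉ L) (hy : y r < 0) :
    r ∉ leftSide y L ∧ leftSide y (insert r L) = insert r (leftSide y L) := by
  refine ⟨by simp [mem_leftSide, hr, hy.le], ?_⟩
  ext a
  rcases eq_or_ne a r with rfl | ha
  · simp [mem_leftSide, hy.le]
  · simp [mem_leftSide, ha]

lemma leftSide_insert_of_pos (hr : r ∉ L) (hy : 0 < y r) :
    r ∈ leftSide y L ∧ leftSide y (insert r L) = (leftSide y L).erase r := by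
  refine ⟨by simp [mem_leftSide, hr, hy], ?_⟩
  ext a
  rcases eq_or_ne a r with rfl | ha
  · simp [mem_leftSide, hy]
  · simp [mem_leftSide, ha]

lemma card_leftSide_insert (hr : r ∉ L) (hy : y r ≠ 0) :
    y r < 0 ∧ #(leftSide y (insert r L)) = #(leftSide y L) + 1 ∨
      0 < y r ∧ #(leftSide y L) = #(leftSide y (insert r L)) + 1 := by
  rcases hy.lt_or_gt with hneg | hpos
  · obtain ⟨hmem, heq⟩ := leftSide_insert_of_neg hr hneg
    exact .inl ⟨hneg, by rw [heq, card_insert_of_notMem hmem]⟩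
  · obtain ⟨hmem, heq⟩ := leftSide_insert_of_pos hr hpos
    exact .inr ⟨hpos, by rw [heq, card_erase_add_one hmem]⟩

lemma leftSide_empty : leftSide y ∅ = univ.filter (0 < y ·) := by
  simp [leftSide]

lemma card_leftSide_univ_add_card_leftSide_empty :
    #(leftSide y univ) + #(leftSide y ∅) = Fintype.card ι := by
  simpa [leftSide, add_comm] using card_filter_add_card_filter_not (s := univ) (fun a ↦ 0 < y a)

lemma exists_consecutive_neg_card_leftSide_eq {m : ℕ} (hy : ∀ a, y a ≠ 0)
    (ht : Function.Injective t) (hcard : Fintype.card ι = 2 * m) (hpos : #{a | 0 < y a} < m) :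
    ∃ r r', y r < 0 ∧ y r' < 0 ∧ univ.filter (t · < t r') = insert r (univ.filter (t · < t r)) ∧
      #(leftSide y (univ.filter (t · < t r'))) = m := by
  obtain ⟨e, he⟩ := exists_equiv_fin_strictMono ht
  let L (k : ℕ) : Finset ι := {a | (e.symm a : ℕ) < k}
  have L_eq (i : Fin (Fintype.card ι)) : L i = univ.filter (t · < t (e i)) := by
    ext a
    simpa [L] using (he.lt_iff_lt (a := e.symm a) (b := i)).symm
  have L_succ (i : Fin (Fintype.card ι)) : L (i + 1) = insert (e i) (L i) := by
    ext a
    simp [L, le_iff_eq_or_lt, ← e.symm_apply_eq, Fin.ext_iff]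
  have step (i : Fin (Fintype.card ι)) :
      y (e i) < 0 ∧ #(leftSide y (L (i + 1))) = #(leftSide y (L i)) + 1 ∨
        0 < y (e i) ∧ #(leftSide y (L i)) = #(leftSide y (L (i + 1))) + 1 := by
    rw [L_succ]
    exact card_leftSide_insert (by simp [L]) (hy (e i))
  have L_zero : L 0 = ∅ := by simp [L]
  have L_card : L (Fintype.card ι) = univ := by simp [L]
  have h₀ : #(leftSide y (L 0)) < m := by rwa [L_zero, leftSide_empty]
  have hn : m < #(leftSide y (L (Fintype.card ι))) := by
    have hsum := card_leftSide_univ_add_card_leftSide_empty (y := y)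
    rw [L_card]
    rw [L_zero] at h₀
    omega
  obtain ⟨k, hk, hk₁, hk₀, hk₂⟩ := exists_consecutive_of_lt_of_lt
    (c := fun k ↦ #(leftSide y (L k))) (fun k hk ↦ (step ⟨k, hk⟩).imp And.right And.right) h₀ hn
  let i : Fin (Fintype.card ι) := ⟨k, by omega⟩
  let i' : Fin (Fintype.card ι) := ⟨k + 1, by omega⟩
  refine ⟨e i, e i', ?_, ?_, ?_, ?_⟩
  · exact (step i).elim And.left fun h ↦ by grind
  · exact (step i').elim And.left fun h ↦ by grind
  · rw [← L_eq i, ← L_eq i', ← L_succ]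
  · rw [← L_eq i']
    exact hk₁

end LeftSide

section Crossing

variable {ι 𝕜 : Type*} [Fintype ι] [DecidableEq ι] [Field 𝕜] [LinearOrder 𝕜]
  [IsStrictOrderedRing 𝕜] {y t : ι → 𝕜} {L : Finset ι} {r : ι}

lemma hasSignedSupport_mul_sub (hy : ∀ a, y a ≠ 0) (ht : Function.Injective t)
    (hL : ∀ a ≠ r, a ∈ L ↔ t a < t r) :
    HasSignedSupport (fun a ↦ y a * (t a - t r)) ((leftSide y L).erase r)
      ((leftSide y L)ᶜ.erase r) := by
  intro a
  rcases eq_or_ne a r with rfl | ha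
  · simp
  · rcases (hy a).lt_or_gt with hya | hya <;> rcases (ht.ne ha).lt_or_gt with hta | hta
    all_goals
      simp [mem_leftSide, ha, hL, mul_pos_iff, mul_neg_iff, hya, hya.not_gt, hta, hta.not_gt]

lemma exists_hasSignedSupport_mul_sub {m : ℕ} (hy : ∀ a, y a ≠ 0) (ht : Function.Injective t)
    (hcard : Fintype.card ι = 2 * m) (hpos : #{a | 0 < y a} < m) :
    ∃ S : Finset ι, #S = m ∧ ∃ r ∈ S, ∃ r' ∉ S,
      HasSignedSupport (fun a ↦ y a * (t a - t r)) (S.erase r) Sᶜ ∧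
      HasSignedSupport (fun a ↦ y a * (t a - t r')) S (Sᶜ.erase r') := by
  obtain ⟨r, r', hr, hr', heq, hS⟩ := exists_consecutive_neg_card_leftSide_eq hy ht hcard hpos
  have hrS : r ∈ leftSide y (univ.filter (t · < t r')) := by simp [heq, mem_leftSide, hr.le]
  have hr'S : r' ∉ leftSide y (univ.filter (t · < t r')) := by simp [mem_leftSide, hr'.le]
  refine ⟨leftSide y (univ.filter (t · < t r')), hS, r, hrS, r', hr'S, ?_, ?_⟩
  · convert hasSignedSupport_mul_sub (r := r) hy ht fun a ha ↦ ?_ using 1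
    · exact (erase_eq_of_notMem (by simpa using hrS)).symm
    · simp [heq, ha]
  · convert hasSignedSupport_mul_sub (r := r') hy ht fun a _ ↦ ?_ using 1
    · exact (erase_eq_of_notMem hr'S).symm
    · simp

end Crossing

section Pencil

variable {ι 𝕜 : Type*} [Field 𝕜]

/-- Any two coordinates determine a vector of `K`. For the affine dependencies of `d + 3` points in
dimension `d`, this says that the points are in general position. -/
def IsDeterminedByPairs (K : Submodule 𝕜 (ι → 𝕜)) : Prop :=
  ∀ w ∈ K, ∀ a b, a ≠ b → w a = 0 → w b = 0 → w = 0

variable {K : Submodule 𝕜 (ι → 𝕜)}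

lemma exists_mem_ne_zero_apply_eq_zero [Finite ι] (hK : 1 < finrank 𝕜 K) (r : ι) :
    ∃ w ∈ K, w ≠ 0 ∧ w r = 0 := by
  have hker : LinearMap.ker (LinearMap.proj r ∘ₗ K.subtype : K →ₗ[𝕜] 𝕜) ≠ ⊥ :=
    LinearMap.ker_ne_bot_of_finrank_lt (by rwa [finrank_self])
  obtain ⟨w, hwr, hw⟩ := Submodule.exists_mem_ne_zero_of_ne_bot hker
  exact ⟨w, w.2, by simpa using hw, by simpa using hwr⟩

lemma nontrivial_of_one_lt_finrank [Finite ι] (hK : 1 < finrank 𝕜 K) : Nontrivial ι := by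
  have := Fintype.ofFinite ι
  rw [← Fintype.one_lt_card_iff_nontrivial, ← finrank_fintype_fun_eq_card 𝕜]
  exact hK.trans_le (Submodule.finrank_le K)

lemma IsDeterminedByPairs.injective_div (hK : IsDeterminedByPairs K) {w y : ι → 𝕜} (hw : w ∈ K)
    (hy : y ∈ K) (hy₀ : ∀ a, y a ≠ 0) (hw₀ : w ≠ 0) {r : ι} (hr : w r = 0) :
    Function.Injective fun a ↦ w a / y a := by
  intro a b hab
  by_contra hne
  have hsub : w - (w a / y a) • y = 0 := by
    refine hK _ (K.sub_mem hw (K.smul_mem _ hy)) a b hne ?_ ?_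
    · simp [hy₀ a]
    · simp only at hab
      simp [hab, hy₀ b]
  have hdiv : w a / y a = 0 := by simpa [hr, hy₀ r] using congrFun hsub r
  exact hw₀ (by simpa [hdiv] using hsub)

variable [LinearOrder 𝕜] [IsStrictOrderedRing 𝕜]

lemma IsDeterminedByPairs.exists_eq_smul [Fintype ι] [DecidableEq ι] (hK : IsDeterminedByPairs K)
    {S : Finset ι} {r r' c : ι} {w w' u : ι → 𝕜} (hr : r ∈ S) (hr' : r' ∉ S)
    (hwK : w ∈ K) (hw'K : w' ∈ K) (hw : HasSignedSupport w (S.erase r) Sᶜ)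
    (hw' : HasSignedSupport w' S (Sᶜ.erase r')) (huK : u ∈ K) (hu : ∀ a ∈ S, 0 ≤ u a)
    (hu' : ∀ a ∉ S, u a ≤ 0) (hc : c ∈ S) (huc : u c = 0) : ∃ α : 𝕜, u = α • w := by
  have hwr : w r = 0 := hw.eq_zero_iff.2 (by simp [hr])
  have hw'r' : w' r' = 0 := hw'.eq_zero_iff.2 (by simp [hr'])
  have hwr' : w r' < 0 := hw.neg (by simpa)
  have hw'r : 0 < w' r := hw'.pos hr
  set α := u r' / w r'
  set β := u r / w' r
  have hα : 0 ≤ α := div_nonneg_of_nonpos (hu' r' hr') hwr'.le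
  have hβ : 0 ≤ β := div_nonneg (hu r hr) hw'r.le
  have hcomb : u = α • w + β • w' := by
    rw [← sub_eq_zero]
    refine hK _ (K.sub_mem huK (K.add_mem (K.smul_mem α hwK) (K.smul_mem β hw'K))) r r'
      (ne_of_mem_of_not_mem hr hr') ?_ ?_
    · simp [hwr, β, hw'r.ne']
    · simp [hw'r', α, hwr'.ne]
  have hwc : 0 ≤ w c := by
    rcases eq_or_ne c r with rfl | hcr
    · exact hwr.ge
    · exact (hw.pos (by simp [hcr, hc])).le
  have hβ₀ : β = 0 := by
    have hsum : α * w c + β * w' c = 0 := by simpa [huc] using (congrFun hcomb c).symm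
    have hβc := (add_eq_zero_iff_of_nonneg (mul_nonneg hα hwc)
      (mul_nonneg hβ (hw'.pos hc).le)).1 hsum
    exact (mul_eq_zero.1 hβc.2).resolve_right (hw'.pos hc).ne'
  exact ⟨α, by simpa [hβ₀] using hcomb⟩

lemma exists_sign_smul_sub_eq_sign [Finite ι] (w u : ι → 𝕜) :
    ∃ c : 𝕜, ∀ a, w a ≠ 0 → SignType.sign ((c • w - u) a) = SignType.sign (w a) := by
  have hlarge (a : ι) : ∀ᶠ c : 𝕜 in Filter.atTop,
      w a ≠ 0 → SignType.sign ((c • w - u) a) = SignType.sign (w a) := by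
    filter_upwards [Filter.eventually_gt_atTop (u a / w a)] with c hc hwa
    rcases hwa.lt_or_gt with hneg | hpos
    · have := (div_lt_iff_of_neg hneg).1 hc
      simpa [sign_neg hneg, sign_eq_neg_one_iff] using this
    · have := (div_lt_iff₀ hpos).1 hc
      simpa [sign_pos hpos, sign_eq_one_iff] using this
  exact (Filter.eventually_all.2 hlarge).exists

variable [Fintype ι]

lemma IsDeterminedByPairs.exists_forall_ne_zero_card_pos_lt (hK : IsDeterminedByPairs K)
    (hfin : 1 < finrank 𝕜 K) {m : ℕ} (hcard : Fintype.card ι ≤ 2 * m) :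
    ∃ y ∈ K, (∀ a, y a ≠ 0) ∧ #{a | 0 < y a} < m := by
  obtain ⟨r, r', hr'⟩ := nontrivial_of_one_lt_finrank hfin
  obtain ⟨w, hwK, hw₀, hwr, hpos⟩ : ∃ w ∈ K, w ≠ 0 ∧ w r = 0 ∧ #{a | 0 < w a} < m := by
    obtain ⟨w, hwK, hw₀, hwr⟩ := exists_mem_ne_zero_apply_eq_zero hfin r
    rcases card_pos_lt_or_card_neg_lt hwr hcard with hpos | hneg
    · exact ⟨w, hwK, hw₀, hwr, hpos⟩
    · exact ⟨-w, K.neg_mem hwK, neg_ne_zero.2 hw₀, by simpa using hwr, by simpa using hneg⟩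
  obtain ⟨u, huK, hur⟩ : ∃ u ∈ K, 0 < u r := by
    obtain ⟨u, huK, hu₀, hur'⟩ := exists_mem_ne_zero_apply_eq_zero hfin r'
    have hur : u r ≠ 0 := fun hur ↦ hu₀ (hK u huK r r' hr' hur hur')
    rcases hur.lt_or_gt with hneg | hpos
    · exact ⟨-u, K.neg_mem huK, by simpa using hneg⟩
    · exact ⟨u, huK, hpos⟩
  obtain ⟨c, hc⟩ := exists_sign_smul_sub_eq_sign w u
  have hne (a : ι) (ha : a ≠ r) : w a ≠ 0 := fun hwa ↦ hw₀ (hK w hwK a r ha hwa hwr)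
  refine ⟨c • w - u, K.sub_mem (K.smul_mem c hwK) huK, fun a ↦ ?_, ?_⟩
  · rcases eq_or_ne a r with rfl | ha
    · simpa [hwr] using hur.ne'
    · rw [← sign_ne_zero, hc a (hne a ha)]
      exact sign_ne_zero.2 (hne a ha)
  · convert hpos using 3 with a
    rcases eq_or_ne a r with rfl | ha
    · simp [hwr, hur.le]
    · rw [← sign_eq_one_iff, hc a (hne a ha), sign_eq_one_iff]

theorem IsDeterminedByPairs.exists_hasSignedSupport [DecidableEq ι] (hK : IsDeterminedByPairs K)
    (hfin : 1 < finrank 𝕜 K) {m : ℕ} (hcard : Fintype.card ι = 2 * m) :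
    ∃ S : Finset ι, #S = m ∧ ∃ r ∈ S, ∃ r' ∉ S, ∃ w ∈ K, ∃ w' ∈ K,
      HasSignedSupport w (S.erase r) Sᶜ ∧ HasSignedSupport w' S (Sᶜ.erase r') := by
  obtain ⟨r₀, -⟩ := nontrivial_of_one_lt_finrank hfin
  obtain ⟨x, hxK, hx₀, hxr⟩ := exists_mem_ne_zero_apply_eq_zero hfin r₀
  obtain ⟨y, hyK, hy₀, hpos⟩ := hK.exists_forall_ne_zero_card_pos_lt hfin hcard.le
  obtain ⟨S, hS, r, hr, r', hr', hw, hw'⟩ :=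
    exists_hasSignedSupport_mul_sub hy₀ (hK.injective_div hxK hyK hy₀ hx₀ hxr) hcard hpos
  have hmem (s : 𝕜) : (fun a ↦ y a * (x a / y a - s)) ∈ K := by
    convert K.sub_mem hxK (K.smul_mem s hyK) using 1
    ext a
    simp [mul_sub, mul_div_cancel₀ _ (hy₀ a), mul_comm]
  exact ⟨S, hS, r, hr, r', hr', _, hmem _, _, hmem _, hw, hw'⟩

end Pencil

section AffineDependencies

variable {ι 𝕜 E : Type*} [Fintype ι] [Field 𝕜] [AddCommGroup E] [Module 𝕜 E] {p : ι → E}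

variable (𝕜 p) in
/-- The weights `w` of total mass zero for which the weighted sum of the points `p a` vanishes. -/
def affineDependencies : Submodule 𝕜 (ι → 𝕜) :=
  LinearMap.ker ((Fintype.linearCombination 𝕜 fun _ ↦ (1 : 𝕜)).prod
    (Fintype.linearCombination 𝕜 p))

lemma mem_affineDependencies {w : ι → 𝕜} :
    w ∈ affineDependencies 𝕜 p ↔ ∑ a, w a = 0 ∧ ∑ a, w a • p a = 0 := by
  simp [affineDependencies, Fintype.linearCombination_apply]

lemma card_le_finrank_add_finrank_affineDependencies [FiniteDimensional 𝕜 E] :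
    Fintype.card ι ≤ finrank 𝕜 E + 1 + finrank 𝕜 (affineDependencies 𝕜 p) := by
  let f : (ι → 𝕜) →ₗ[𝕜] 𝕜 × E :=
    (Fintype.linearCombination 𝕜 fun _ ↦ (1 : 𝕜)).prod (Fintype.linearCombination 𝕜 p)
  have hrank := f.finrank_range_add_finrank_ker
  have hrange := Submodule.finrank_le (LinearMap.range f)
  simp only [finrank_fintype_fun_eq_card, finrank_prod, finrank_self] at hrank hrange
  change _ ≤ _ + finrank 𝕜 (LinearMap.ker f)
  omega

lemma isDeterminedByPairs_affineDependencies
    (hp : ∀ s : Finset ι, #s + 2 = Fintype.card ι → AffineIndependent 𝕜 fun a : s ↦ p a) :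
    IsDeterminedByPairs (affineDependencies 𝕜 p) := by
  classical
  intro w hw a b hab ha hb
  obtain ⟨hsum, hsmul⟩ := mem_affineDependencies.1 hw
  have hcard : #({a, b}ᶜ : Finset ι) + 2 = Fintype.card ι := by
    rw [← card_pair hab, card_compl_add_card]
  have hzero (c : ι) (hc : c ∉ ({a, b}ᶜ : Finset ι)) : w c = 0 := by
    obtain rfl | rfl : c = a ∨ c = b := by simpa [or_iff_not_imp_left] using hc
    exacts [ha, hb]
  have hsum' : ∑ c : ({a, b}ᶜ : Finset ι), w c = 0 := by
    rw [sum_coe_sort _ w, sum_subset (subset_univ _) fun c _ ↦ hzero c, hsum]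
  have hsmul' : ∑ c : ({a, b}ᶜ : Finset ι), w c • p c = 0 := by
    rw [sum_coe_sort _ fun c ↦ w c • p c,
      sum_subset (subset_univ _) fun c _ hc ↦ by rw [hzero c hc, zero_smul], hsmul]
  have hindep := (hp _ hcard).eq_zero_of_sum_eq_zero
    (w := fun c : ({a, b}ᶜ : Finset ι) ↦ w c) hsum' hsmul'
  ext c
  by_cases hc : c ∈ ({a, b}ᶜ : Finset ι)
  · exact hindep ⟨c, hc⟩ (mem_univ _)
  · exact hzero c hc

variable [LinearOrder 𝕜] [IsStrictOrderedRing 𝕜]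

lemma exists_weights_of_mem_convexHull_image {A : Finset ι} {z : E}
    (hz : z ∈ convexHull 𝕜 (p '' A)) :
    ∃ w ∈ stdSimplex 𝕜 ι, (∀ a ∉ A, w a = 0) ∧ ∑ a, w a • p a = z := by
  classical
  have hconvex : Convex 𝕜 {w : ι → 𝕜 | ∀ a ∉ A, w a = 0} := by
    intro w hw v hv α β _ _ _ a ha
    simp [hw a ha, hv a ha]
  have himage := ((convex_stdSimplex 𝕜 ι).inter hconvex).linear_image
    (Fintype.linearCombination 𝕜 p)
  obtain ⟨w, ⟨hw, hwA⟩, hwz⟩ := convexHull_min (t := Fintype.linearCombination 𝕜 p ''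
    (stdSimplex 𝕜 ι ∩ {w | ∀ a ∉ A, w a = 0})) (by
      rintro _ ⟨a, ha, rfl⟩
      refine ⟨Pi.single a 1, ⟨single_mem_stdSimplex 𝕜 a, fun b hb ↦ ?_⟩, by simp⟩
      exact Pi.single_eq_of_ne (ne_of_mem_of_not_mem ha hb).symm _) himage hz
  exact ⟨w, hw, hwA, hwz⟩

lemma exists_mem_affineDependencies_of_mem_convexHull {A B : Finset ι} (hAB : Disjoint A B) {z : E}
    (hA : z ∈ convexHull 𝕜 (p '' A)) (hB : z ∈ convexHull 𝕜 (p '' B)) :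
    ∃ u ∈ affineDependencies 𝕜 p, (∀ a ∉ B, 0 ≤ u a) ∧ (∀ a ∉ A, u a ≤ 0) ∧
      ∑ a ∈ A, u a = 1 ∧ A.centerMass u p = z := by
  obtain ⟨v, hv, hvA, rfl⟩ := exists_weights_of_mem_convexHull_image hA
  obtain ⟨w, hw, hwB, hwz⟩ := exists_weights_of_mem_convexHull_image hB
  have hsub (a : ι) (ha : a ∈ A) : (v - w) a = v a := by
    simp [hwB a (disjoint_left.1 hAB ha)]
  have hsum : ∑ a ∈ A, (v - w) a = 1 := by
    rw [sum_congr rfl hsub, ← hv.2]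
    exact sum_subset (subset_univ A) fun a _ ↦ hvA a
  have hsmul : ∑ a ∈ A, (v - w) a • p a = ∑ a, v a • p a := by
    rw [sum_congr rfl fun a ha ↦ by rw [hsub a ha]]
    exact sum_subset (subset_univ A) fun a _ ha ↦ by rw [hvA a ha, zero_smul]
  refine ⟨v - w, mem_affineDependencies.2 ⟨?_, ?_⟩, fun a ha ↦ ?_, fun a ha ↦ ?_, hsum, ?_⟩
  · simp [hv.2, hw.2]
  · simp [sub_smul, hwz]
  · simpa [hwB a ha] using hv.1 a
  · simpa [hvA a ha] using hw.1 a
  · rw [centerMass, hsum, inv_one, one_smul, hsmul]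

lemma HasSignedSupport.centerMass_mem_convexHull {w : ι → 𝕜} {A B : Finset ι}
    (h : HasSignedSupport w A B) (hw : w ∈ affineDependencies 𝕜 p) (hA : A.Nonempty) :
    A.centerMass w p ∈ convexHull 𝕜 (p '' A) ∩ convexHull 𝕜 (p '' B) := by
  classical
  obtain ⟨hsum, hsmul⟩ := mem_affineDependencies.1 hw
  have hdisj : Disjoint A B :=
    disjoint_left.2 fun a ha hb ↦ (h.pos ha).not_gt (h.neg hb)
  have hzero (a : ι) (ha : a ∉ A ∪ B) : w a = 0 := h.eq_zero_iff.2 (by simpa using ha)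
  have hsumAB : ∑ a ∈ A, w a + ∑ a ∈ B, w a = 0 := by
    rw [← sum_union hdisj, sum_subset (subset_univ _) fun a _ ↦ hzero a, hsum]
  have hsmulAB : ∑ a ∈ A, w a • p a + ∑ a ∈ B, w a • p a = 0 := by
    rw [← sum_union hdisj,
      sum_subset (subset_univ _) fun a _ ha ↦ by rw [hzero a ha, zero_smul], hsmul]
  have hpos : 0 < ∑ a ∈ A, w a := sum_pos (fun a ↦ h.pos) hA
  refine ⟨A.centerMass_mem_convexHull (fun a ha ↦ (h.pos ha).le) hpos
    fun a ↦ Set.mem_image_of_mem p, ?_⟩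
  rw [centerMass_of_sum_add_sum_eq_zero hsumAB hsmulAB]
  exact B.centerMass_mem_convexHull_of_nonpos (fun a ha ↦ (h.neg ha).le) (by linarith)
    fun a ↦ Set.mem_image_of_mem p

lemma convexHull_compl_inter_iUnion_convexHull_erase [DecidableEq ι] {S : Finset ι} {r r' : ι}
    {w w' : ι → 𝕜} (hK : IsDeterminedByPairs (affineDependencies 𝕜 p)) (hS : S.Nontrivial)
    (hr : r ∈ S) (hr' : r' ∉ S) (hwK : w ∈ affineDependencies 𝕜 p)
    (hw'K : w' ∈ affineDependencies 𝕜 p) (hw : HasSignedSupport w (S.erase r) Sᶜ)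
    (hw' : HasSignedSupport w' S (Sᶜ.erase r')) :
    convexHull 𝕜 (p '' ↑Sᶜ) ∩ ⋃ c ∈ S, convexHull 𝕜 (p '' ↑(S.erase c)) =
      {(S.erase r).centerMass w p} := by
  refine Set.Subset.antisymm ?_ (Set.singleton_subset_iff.2 ?_)
  · rintro z ⟨hzc, hz⟩
    obtain ⟨c, hc, hzS⟩ := Set.mem_iUnion₂.1 hz
    have hdisj : Disjoint (S.erase c) Sᶜ :=
      disjoint_compl_right.mono_left (S.erase_subset c)
    obtain ⟨u, huK, hu, hu', hsum, rfl⟩ :=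
      exists_mem_affineDependencies_of_mem_convexHull hdisj hzS hzc
    have huc : u c = 0 := le_antisymm (hu' c (by simp)) (hu c (by simpa using hc))
    obtain ⟨α, rfl⟩ := hK.exists_eq_smul hr hr' hwK hw'K hw hw' huK
      (fun a ha ↦ hu a (by simpa using ha)) (fun a ha ↦ hu' a (by simp [ha])) hc huc
    have hα : α ≠ 0 := by
      rintro rfl
      simp at hsum
    have hwc : w c = 0 := by simpa [hα] using huc
    obtain rfl : c = r := by simpa [hc] using hw.eq_zero_iff.1 hwc
    exact centerMass_smul_left _ _ hα
  · obtain ⟨hmem, hmem'⟩ := hw.centerMass_mem_convexHull hwK ((erase_nonempty hr).2 hS)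
    exact ⟨hmem', Set.mem_iUnion₂.2 ⟨r, hr, hmem⟩⟩

end AffineDependencies

theorem linear_conway_gordon_sachs_general {ι 𝕜 E : Type*} [Fintype ι] [DecidableEq ι]
    [Field 𝕜] [LinearOrder 𝕜] [IsStrictOrderedRing 𝕜] [AddCommGroup E] [Module 𝕜 E]
    {m : ℕ} (hcard : Fintype.card ι = 2 * m) (hdim : finrank 𝕜 E + 3 = 2 * m) {p : ι → E}
    (hp : ∀ s : Finset ι, #s = finrank 𝕜 E + 1 → AffineIndependent 𝕜 fun a : s ↦ p a) :
    ∃ S : Finset ι, #S = m ∧ ∃ x : E,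
      convexHull 𝕜 (p '' ↑Sᶜ) ∩ ⋃ c ∈ S, convexHull 𝕜 (p '' ↑(S.erase c)) = {x} := by
  have : FiniteDimensional 𝕜 E := FiniteDimensional.of_finrank_pos (by omega)
  have hK : IsDeterminedByPairs (affineDependencies 𝕜 p) :=
    isDeterminedByPairs_affineDependencies fun s hs ↦ hp s (by omega)
  have hfin : 1 < finrank 𝕜 (affineDependencies 𝕜 p) := by
    have := card_le_finrank_add_finrank_affineDependencies (𝕜 := 𝕜) (p := p)
    omega
  obtain ⟨S, hS, r, hr, r', hr', w, hwK, w', hw'K, hw, hw'⟩ :=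
    hK.exists_hasSignedSupport hfin hcard
  have hSnontrivial : S.Nontrivial := one_lt_card_iff_nontrivial.1 (by omega)
  exact ⟨S, hS, _, convexHull_compl_inter_iUnion_convexHull_erase hK hSnontrivial hr hr'
    hwK hw'K hw hw'⟩

lemma affineIndependent_coe_of_card_eq_four {ι 𝕜 E : Type*} [Ring 𝕜] [AddCommGroup E]
    [Module 𝕜 E] {p : ι → E}
    (hp : ∀ a b c d : ι, a ≠ b → a ≠ c → a ≠ d → b ≠ c → b ≠ d → c ≠ d →
      AffineIndependent 𝕜 ![p a, p b, p c, p d]) {s : Finset ι} (hs : #s = 4) :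
    AffineIndependent 𝕜 fun a : s ↦ p a := by
  let e : Fin 4 ≃ s := (s.equivFinOfCardEq hs).symm
  have hne (i j : Fin 4) (hij : i ≠ j) : (e i : ι) ≠ e j := by simpa using hij
  rw [← affineIndependent_equiv e]
  convert hp (e 0) (e 1) (e 2) (e 3) (hne _ _ (by decide)) (hne _ _ (by decide))
    (hne _ _ (by decide)) (hne _ _ (by decide)) (hne _ _ (by decide)) (hne _ _ (by decide)) using 1
  ext i
  fin_cases i <;> rfl

lemma exists_equiv_fin_six_of_card_eq_three {ι : Type*} [Fintype ι] [DecidableEq ι] {S : Finset ι}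
    (hS : #S = 3) (hScompl : #Sᶜ = 3) :
    ∃ e : Fin 6 ≃ ι, Sᶜ = {e 0, e 1, e 2} ∧ S = {e 3, e 4, e 5} := by
  obtain ⟨a, b, c, -, -, -, habc⟩ := card_eq_three.1 hScompl
  obtain ⟨x, y, z, -, -, -, hxyz⟩ := card_eq_three.1 hS
  have hsurj : Function.Surjective ![a, b, c, x, y, z] := by
    intro i
    have hi : i ∈ S ∨ i ∈ Sᶜ := by simp [em]
    rw [habc, hxyz] at hi
    simp only [mem_insert, mem_singleton] at hi
    rcases hi with (rfl | rfl | rfl) | rfl | rfl | rfl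
    exacts [⟨3, rfl⟩, ⟨4, rfl⟩, ⟨5, rfl⟩, ⟨0, rfl⟩, ⟨1, rfl⟩, ⟨2, rfl⟩]
  have hcard : Fintype.card (Fin 6) = Fintype.card ι := by
    rw [Fintype.card_fin, ← card_add_card_compl S, hS, hScompl]
  have hbij := (Fintype.bijective_iff_surjective_and_card _).2 ⟨hsurj, hcard⟩
  exact ⟨.ofBijective _ hbij, habc, hxyz⟩

lemma iUnion_convexHull_erase_triple {ι 𝕜 E : Type*} [DecidableEq ι] [Semiring 𝕜] [PartialOrder 𝕜]
    [IsOrderedRing 𝕜] [AddCommMonoid E] [Module 𝕜 E] (p : ι → E) {a b c : ι} (hab : a ≠ b)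
    (hbc : b ≠ c) (hca : c ≠ a) :
    ⋃ i ∈ ({a, b, c} : Finset ι), convexHull 𝕜 (p '' ↑(({a, b, c} : Finset ι).erase i)) =
      segment 𝕜 (p a) (p b) ∪ segment 𝕜 (p b) (p c) ∪ segment 𝕜 (p c) (p a) := by
  have herase : ({a, b, c} : Finset ι).erase a = {b, c} ∧
      ({a, b, c} : Finset ι).erase b = {c, a} ∧ ({a, b, c} : Finset ι).erase c = {a, b} := by
    grind
  obtain ⟨ha, hb, hc⟩ := herase
  rw [set_biUnion_insert, set_biUnion_insert, set_biUnion_singleton, ha, hb, hc]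
  simp only [coe_pair, Set.image_pair, convexHull_pair]
  grind

/-- Linear Conway–Gordon–Sachs theorem: Let `f : {1,…,6} → ℝ³` be six
points in 3-space such that no four of them lie in one plane (every four of the points
are affinely independent). Then there exists a partition of `{1,…,6}` into two
3-element sets `{i,j,k}` and `{p,q,r}` (encoded by a permutation `e` of `Fin 6`) such
that the triangle `convexHull {f i, f j, f k}` intersects the union of segments
`[f p, f q] ∪ [f q, f r] ∪ [f r, f p]` in exactly one point. -/
theorem linear_conway_gordon_sachs (f : Fin 6 → EuclideanSpace ℝ (Fin 3))
    (h : ∀ a b c d : Fin 6, a ≠ b → a ≠ c → a ≠ d → b ≠ c → b ≠ d → c ≠ d →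
      AffineIndependent ℝ ![f a, f b, f c, f d]) :
    ∃ e : Fin 6 ≃ Fin 6, ∃ x : EuclideanSpace ℝ (Fin 3),
      convexHull ℝ {f (e 0), f (e 1), f (e 2)} ∩
        (segment ℝ (f (e 3)) (f (e 4)) ∪ segment ℝ (f (e 4)) (f (e 5)) ∪
          segment ℝ (f (e 5)) (f (e 3))) = {x} := by
  obtain ⟨S, hS, x, hx⟩ := linear_conway_gordon_sachs_general (𝕜 := ℝ) (m := 3) (by simp) (by simp)
    fun s hs ↦ affineIndependent_coe_of_card_eq_four h (by simpa using hs)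
  obtain ⟨e, hcompl, rfl⟩ := exists_equiv_fin_six_of_card_eq_three hS (by simp [card_compl, hS])
  refine ⟨e, x, ?_⟩
  rw [hcompl, iUnion_convexHull_erase_triple f (by simp) (by simp) (by simp)] at hx
  simpa [Set.image_insert_eq] using hx
end
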